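/- Let S′, T′, S″, T″ be subsets with S′, S″ ⊆ {1,…,m} and T′, T″ ⊆ {1,…,n}, and suppose it is not the case that both S′ ≤ S″ and T′ ≤ T″. Then there exist a finite list of quadruples (S′ᵢ, T′ᵢ, S″ᵢ, T″ᵢ) of subsets (S′ᵢ, S″ᵢ ⊆ {1,…,m}, T′ᵢ, T″ᵢ ⊆ {1,…,n}) and signs εᵢ ∈ {+1,−1} such that (S′ᵢ, T′ᵢ) < (S′, T′), (S′ᵢ, T′ᵢ) ≤ (S″ᵢ, T″ᵢ), and for every m×n matrix X over every commutative ring, X(S′|T′)·X(S″|T″) = Σᵢ εᵢ·X(S′ᵢ|T′ᵢ)·X(S″ᵢ|T″ᵢ). -/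

import Mathlib

open Finset

/-- The minor `X(A|B)`: the determinant of the submatrix of `X` with row indices in `A` and
column indices in `B`, taken in increasing order; `0` if `|A| ≠ |B|`. -/
def minorM {m n : ℕ} {R : Type*} [CommRing R]
    (X : Matrix (Fin m) (Fin n) R) (A : Finset (Fin m)) (B : Finset (Fin n)) : R :=
  if h : A.card = B.card then
    (Matrix.of fun i j : Fin A.card =>
      X (A.orderEmbOfFin rfl i) (B.orderEmbOfFin h.symm j)).det
  else 0

/-- The Laplace product `X{A|B} = (-1)^(ΣA+ΣB) X(A|B) X(Ã|B̃)`, where elements of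
`Fin n` are counted as the numbers `1,…,n` (so `i : Fin n` counts as `i+1`). -/
def lap {n : ℕ} {R : Type*} [CommRing R]
    (X : Matrix (Fin n) (Fin n) R) (A B : Finset (Fin n)) : R :=
  (-1 : R) ^ (∑ i ∈ A, ((i : ℕ) + 1) + ∑ j ∈ B, ((j : ℕ) + 1)) *
    (minorM X A B * minorM X Aᶜ Bᶜ)

/-- The partial order `S ≤ T` on finite subsets of a linearly ordered set:
writing `S = {s₁<⋯<s_p}` and `T = {t₁<⋯<t_q}`, it means `p ≥ q` and `s_ν ≤ t_ν` for `ν ≤ q`. -/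
def domLE {α : Type*} [LinearOrder α] (S T : Finset α) : Prop :=
  T.card ≤ S.card ∧ ∀ (ν : ℕ) (hT : ν < (T.sort (· ≤ ·)).length)
    (hS : ν < (S.sort (· ≤ ·)).length),
    (S.sort (· ≤ ·))[ν] ≤ (T.sort (· ≤ ·))[ν]

/-- A subset `S ⊆ {1,…,n}` is good if `S ≤ S̃` where `S̃` is the complement of `S`. -/
def goodSet {n : ℕ} (S : Finset (Fin n)) : Prop := domLE S Sᶜ

/-- The generic `m×n` matrix, whose entries are the indeterminates `x_{ij}`. -/
noncomputable def genX (m n : ℕ) (R : Type*) [CommRing R] :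
    Matrix (Fin m) (Fin n) (MvPolynomial (Fin m × Fin n) R) :=
  Matrix.of fun i j => MvPolynomial.X (i, j)

/-!
Merge `S'` with `S''` and `T'` with `T''` into weakly increasing sequences of a common length `N`.
These select an `N × N` matrix `Y`, with repeated rows and columns, and the given product becomes a
Laplace product `Y(A|B) Y(Aᶜ|Bᶜ)`. Call a set good if it dominates its complement. If `A` and `B`
are good, then `Y(A|B) Y(Aᶜ|Bᶜ)` is either zero or a product of two comparable minors of `X`, so
it suffices to rewrite a Laplace product as a combination of those indexed by good sets lying below
the original ones.

Two facts do this. Combinatorially, every set `S` is an integer combination of formal sums of all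
`V ⊆ G` with `|V| = |S|`, where `G` is good and below `S`; this is an induction on the ground set,
adding a new maximum. Algebraically, the signed Laplace products of the pairs `(V, B)` with `V ⊆ A`
and `|V| = |B|` have the same sum as those of the pairs `(A, U)` with `U ⊇ B`. So a good set can be
brought into the first argument and then into the second, the sets enlarged on the way staying
good and below the original ones.

Strictness needs no computation: the merge lists a repeated index with its copy from `S'` first, so
a good set below the original one that selects `S'` again must be the original one, which would
make the given product comparable already.
-/

section Dominance

variable {α β : Type*} [LinearOrder α] [LinearOrder β] {S T U : Finset α} {z : α}

lemma sort_getElem_le_iff (S : Finset α) {i : ℕ} (hi : i < (S.sort (· ≤ ·)).length) (a : α) :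
    (S.sort (· ≤ ·))[i] ≤ a ↔ i < #{s ∈ S | s ≤ a} := by
  rw [length_sort] at hi
  change S.orderEmbOfFin rfl ⟨i, hi⟩ ≤ a ↔ _
  set e := S.orderEmbOfFin rfl
  have mem_filter_iff (k : Fin #S) : e k ∈ ({s ∈ S | s ≤ a} : Finset α) ↔ e k ≤ a := by
    simp [e]
  constructor
  · intro hia
    have hsub : (Iic ⟨i, hi⟩).map e.toEmbedding ⊆ {s ∈ S | s ≤ a} := by
      intro s hs
      obtain ⟨k, hk, rfl⟩ := mem_map.1 hs
      exact (mem_filter_iff k).2 ((e.monotone (mem_Iic.1 hk)).trans hia)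
    simpa using card_le_card hsub
  · contrapose!
    intro hia
    have hsub : ({s ∈ S | s ≤ a} : Finset α) ⊆ (Iio ⟨i, hi⟩).map e.toEmbedding := by
      intro s hs
      obtain ⟨hsS, hsa⟩ := mem_filter.1 hs
      obtain ⟨k, rfl⟩ : s ∈ Set.range e := by rwa [range_orderEmbOfFin]
      exact mem_map_of_mem _ (mem_Iio.2 (e.lt_iff_lt.1 (hsa.trans_lt hia)))
    simpa using card_le_card hsub

lemma domLE_iff_card_filter_le :
    domLE S T ↔ ∀ a, #{t ∈ T | t ≤ a} ≤ #{s ∈ S | s ≤ a} := by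
  constructor
  · rintro ⟨hcard, hle⟩ a
    by_contra! hlt
    have hT : #{s ∈ S | s ≤ a} < #T := hlt.trans_le (card_filter_le _ _)
    have hsort := hle _ (by rwa [length_sort]) (by rw [length_sort]; exact hT.trans_le hcard)
    exact lt_irrefl _ ((sort_getElem_le_iff S _ a).1
      (hsort.trans ((sort_getElem_le_iff T _ a).2 hlt)))
  · intro h
    refine ⟨?_, fun i hT hS ↦ ?_⟩
    · by_contra! hlt
      have hlt' : #S < (T.sort (· ≤ ·)).length := by rwa [length_sort]
      have hcount := (sort_getElem_le_iff T hlt' _).1 le_rfl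
      exact absurd (hcount.trans_le (h _)) (card_filter_le _ _).not_gt
    · exact (sort_getElem_le_iff S hS _).2
        (((sort_getElem_le_iff T hT _).1 le_rfl).trans_le (h _))

lemma domLE_refl (S : Finset α) : domLE S S := domLE_iff_card_filter_le.2 fun _ ↦ le_rfl

lemma domLE.trans (hST : domLE S T) (hTU : domLE T U) : domLE S U := by
  rw [domLE_iff_card_filter_le] at *
  exact fun a ↦ (hTU a).trans (hST a)

lemma domLE.antisymm (hST : domLE S T) (hTS : domLE T S) : S = T := by
  have hcard : #S = #T := hTS.1.antisymm hST.1
  have hsort : S.sort (· ≤ ·) = T.sort (· ≤ ·) :=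
    List.ext_getElem (by simp [hcard]) fun i hS hT ↦ (hST.2 i hT hS).antisymm (hTS.2 i hS hT)
  rw [← sort_toFinset S (· ≤ ·), hsort, sort_toFinset]

lemma domLE_of_injOn {g : α → α} (hmaps : Set.MapsTo g T S) (hinj : Set.InjOn g T)
    (hle : ∀ t ∈ T, g t ≤ t) : domLE S T := by
  refine domLE_iff_card_filter_le.2 fun a ↦ card_le_card_of_injOn g (fun t ht ↦ ?_)
    (hinj.mono (coe_subset.2 (filter_subset _ _)))
  obtain ⟨htT, hta⟩ := mem_filter.1 ht
  exact mem_filter.2 ⟨hmaps htT, (hle t htT).trans hta⟩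

lemma domLE_of_subset (h : T ⊆ S) : domLE S T :=
  domLE_of_injOn (g := id) h (Set.injOn_id _) fun _ _ ↦ le_rfl

lemma domLE.card_filter_le_card_filter (h : domLE S T) {p : α → Prop} [DecidablePred p]
    (hp : ∀ ⦃a b⦄, a ≤ b → p b → p a) : #{t ∈ T | p t} ≤ #{s ∈ S | p s} := by
  rcases ({t ∈ T | p t} : Finset α).eq_empty_or_nonempty with hempty | hne
  · simp [hempty]
  · set a := ({t ∈ T | p t} : Finset α).max' hne
    have ha : p a := (mem_filter.1 (max'_mem _ hne)).2
    calc #{t ∈ T | p t} ≤ #{t ∈ T | t ≤ a} :=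
          card_le_card fun t ht ↦ mem_filter.2 ⟨(mem_filter.1 ht).1, le_max' _ t ht⟩
      _ ≤ #{s ∈ S | s ≤ a} := domLE_iff_card_filter_le.1 h a
      _ ≤ #{s ∈ S | p s} := card_le_card (monotone_filter_right S fun s _ hs ↦ hp hs ha)

lemma domLE.image {ρ : α → β} (h : domLE S T) (hρ : Monotone ρ) (hinj : Set.InjOn ρ S) :
    domLE (S.image ρ) (T.image ρ) := by
  refine domLE_iff_card_filter_le.2 fun b ↦ ?_
  rw [filter_image, filter_image,
    card_image_of_injOn (hinj.mono (coe_subset.2 (filter_subset _ _)))]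
  exact card_image_le.trans (h.card_filter_le_card_filter fun _ _ hab hb ↦ (hρ hab).trans hb)

lemma domLE.insert_right (h : domLE S T) (hcard : #T < #S) (hz : ∀ s ∈ S, s ≤ z) :
    domLE S (insert z T) := by
  refine domLE_iff_card_filter_le.2 fun a ↦ ?_
  by_cases hza : z ≤ a
  · calc #{t ∈ insert z T | t ≤ a} ≤ #(insert z T) := card_filter_le _ _
      _ ≤ #S := (card_insert_le z T).trans hcard
      _ = #{s ∈ S | s ≤ a} := by rw [filter_true_of_mem fun s hs ↦ (hz s hs).trans hza]
  · rw [filter_insert, if_neg hza]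
    exact domLE_iff_card_filter_le.1 h a

lemma domLE.insert_insert (h : domLE S T) (hz : z ∉ S) : domLE (insert z S) (insert z T) := by
  refine domLE_iff_card_filter_le.2 fun a ↦ ?_
  have hcount := domLE_iff_card_filter_le.1 h a
  rw [filter_insert, filter_insert]
  split_ifs
  · rw [card_insert_of_notMem fun hmem ↦ hz (mem_filter.1 hmem).1]
    exact (card_insert_le _ _).trans (Nat.succ_le_succ hcount)
  · exact hcount

end Dominance

section LayerSum

variable {α M : Type*} [AddCommGroup M]

/-- The sum of `f` over the `j`-element subsets of `G`. When `f V` is the squarefree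
monomial `∏ v ∈ V, x v`, this is the elementary symmetric polynomial `e_j` in the variables
`x v`, `v ∈ G`. -/
def layerSum (f : Finset α → M) (j : ℕ) (G : Finset α) : M := ∑ V ∈ G.powersetCard j, f V

lemma layerSum_zero (f : Finset α → M) (G : Finset α) : layerSum f 0 G = f ∅ := by
  simp [layerSum]

lemma layerSum_card_self (f : Finset α → M) (G : Finset α) : layerSum f #G G = f G := by
  simp [layerSum]

lemma layerSum_eq_zero (f : Finset α → M) {j : ℕ} {G : Finset α} (h : #G < j) :
    layerSum f j G = 0 := by
  simp [layerSum, powersetCard_eq_empty.2 h]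

lemma layerSum_succ_insert [DecidableEq α] (f : Finset α → M) (j : ℕ) {G : Finset α} {z : α}
    (hz : z ∉ G) :
    layerSum f (j + 1) (insert z G) = layerSum f (j + 1) G + layerSum (f ∘ insert z) j G := by
  have notMem {i : ℕ} {V : Finset α} (hV : V ∈ G.powersetCard i) : z ∉ V :=
    fun hzV ↦ hz ((mem_powersetCard.1 hV).1 hzV)
  have hinj : Set.InjOn (insert z) (G.powersetCard j : Set (Finset α)) := fun V hV W hW hVW ↦ by
    rw [← erase_insert (notMem hV), hVW, erase_insert (notMem hW)]
  have hdisj : Disjoint (G.powersetCard (j + 1)) ((G.powersetCard j).image (insert z)) := by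
    refine disjoint_right.2 fun V hV hV' ↦ ?_
    obtain ⟨W, -, rfl⟩ := mem_image.1 hV
    exact notMem hV' (mem_insert_self z W)
  rw [layerSum, powersetCard_succ_insert hz, sum_union hdisj, sum_image hinj]
  rfl

lemma layerSum_layerSum (f : Finset α → M) {i j : ℕ} (hji : j ≤ i) (G : Finset α) :
    layerSum (layerSum f j) i G = (#G - j).choose (i - j) • layerSum f j G := by
  classical
  have hcomm : layerSum (layerSum f j) i G =
      ∑ W ∈ G.powersetCard j, ∑ V ∈ G.powersetCard i with W ⊆ V, f W := by
    refine sum_comm' fun V W ↦ ?_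
    simp only [mem_filter, mem_powersetCard]
    exact ⟨fun ⟨hV, hW⟩ ↦ ⟨⟨hV, hW.1⟩, hW.1.trans hV.1, hW.2⟩,
      fun ⟨⟨hV, hWV⟩, hW⟩ ↦ ⟨hV, hWV, hW.2⟩⟩
  rw [hcomm, layerSum, smul_sum]
  refine sum_congr rfl fun W hW ↦ ?_
  obtain ⟨hWG, hWj⟩ := mem_powersetCard.1 hW
  rw [sum_const, card_filter_powersetCard_subset W G i hWG (hWj.trans_le hji), hWj]

end LayerSum

section GoodLayerSpan

variable {α M : Type*} [LinearOrder α] [AddCommGroup M] {E G H G' : Finset α} {z : α} {i j : ℕ}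
  {f : Finset α → M}

/-- `G'` is a subset of the ground set `E` that is good relative to `E` (it dominates its
complement in `E`), lies below `G`, and misses at most `j` elements of `E`. The last condition
is what carries the induction on `E`. -/
structure GoodBelow (E : Finset α) (j : ℕ) (G G' : Finset α) : Prop where
  subset : G' ⊆ E
  good : domLE G' (E \ G')
  card_le : #E ≤ #G' + j
  le : domLE G' G

namespace GoodBelow

lemma mono (h : GoodBelow E i G G') (hij : i ≤ j) (hGH : domLE G H) : GoodBelow E j H G' :=
  ⟨h.subset, h.good, h.card_le.trans (by lia), h.le.trans hGH⟩

lemma insert_insert (h : GoodBelow E j G G') (hz : z ∉ E) :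
    GoodBelow (insert z E) j (insert z G) (insert z G') where
  subset := insert_subset_insert z h.subset
  good := by
    rw [insert_sdiff_insert, sdiff_insert_of_notMem hz]
    exact (domLE_of_subset (subset_insert z G')).trans h.good
  card_le := by
    rw [card_insert_of_notMem hz, card_insert_of_notMem fun hzG ↦ hz (h.subset hzG)]
    linarith [h.card_le]
  le := h.le.insert_insert fun hzG ↦ hz (h.subset hzG)

lemma insert_ground (h : GoodBelow E j G G') (hz : ∀ x ∈ E, x < z) (hi : i ≤ #G')
    (hcard : #E < #G' + i) : GoodBelow (insert z E) i G G' where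
  subset := h.subset.trans (subset_insert z E)
  good := by
    rw [insert_sdiff_of_notMem E fun hzG ↦ (hz z (h.subset hzG)).false]
    refine h.good.insert_right ?_ fun x hx ↦ (hz x (h.subset hx)).le
    rw [card_sdiff_of_subset h.subset]
    lia
  card_le := (card_insert_le z E).trans hcard
  le := h.le

end GoodBelow

/-- The additive group generated by the `j`-layer sums over the good subsets of `E` below `G`. -/
def goodLayerSpan (E : Finset α) (f : Finset α → M) (j : ℕ) (G : Finset α) : AddSubgroup M :=
  AddSubgroup.closure (layerSum f j '' {G' | GoodBelow E j G G'})

lemma layerSum_mem_goodLayerSpan_of_goodBelow (f : Finset α → M) (h : GoodBelow E j G G') :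
    layerSum f j G' ∈ goodLayerSpan E f j G :=
  AddSubgroup.subset_closure ⟨G', h, rfl⟩

lemma goodLayerSpan_le {K : AddSubgroup M} :
    goodLayerSpan E f j G ≤ K ↔ ∀ G', GoodBelow E j G G' → layerSum f j G' ∈ K := by
  rw [goodLayerSpan, AddSubgroup.closure_le, Set.image_subset_iff]
  rfl

lemma goodLayerSpan_mono (h : domLE G H) : goodLayerSpan E f j G ≤ goodLayerSpan E f j H :=
  goodLayerSpan_le.2 fun _ hG' ↦ layerSum_mem_goodLayerSpan_of_goodBelow f (hG'.mono le_rfl h)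

lemma layerSum_zero_mem (f : Finset α → M) (hG : G ⊆ E) :
    layerSum f 0 G ∈ goodLayerSpan E f 0 G := by
  rw [layerSum_zero, ← layerSum_zero f E]
  refine layerSum_mem_goodLayerSpan_of_goodBelow f ⟨Subset.rfl, ?_, le_rfl, domLE_of_subset hG⟩
  exact domLE_of_subset sdiff_subset

lemma GoodBelow.layerSum_mem_insert_ground (f : Finset α → M) (h : GoodBelow E j G G')
    (hz : ∀ x ∈ E, x < z) (hcard : #E < #G' + i) :
    layerSum f i G' ∈ goodLayerSpan (insert z E) f i G := by
  rcases lt_or_ge #G' i with hi | hi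
  · rw [layerSum_eq_zero f hi]
    exact zero_mem _
  · exact layerSum_mem_goodLayerSpan_of_goodBelow f (h.insert_ground hz hi hcard)

lemma GoodBelow.layerSum_insert_mem (f : Finset α → M) (h : GoodBelow E j G G') (hz : z ∉ E)
    (hij : j ≤ i) : layerSum f i (insert z G') ∈ goodLayerSpan (insert z E) f i G :=
  layerSum_mem_goodLayerSpan_of_goodBelow f
    ((h.insert_insert hz).mono hij (domLE_of_subset (subset_insert z G)))

section Step

variable (hz : ∀ x ∈ E, x < z)
  (ih : ∀ (f : Finset α → M) (j : ℕ), ∀ G ⊆ E, layerSum f j G ∈ goodLayerSpan E f j G)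

include hz ih

lemma layerSum_comp_insert_mem (f : Finset α → M) (j : ℕ) (hG : G ⊆ E) :
    layerSum (f ∘ insert z) j G ∈ goodLayerSpan (insert z E) f (j + 1) G := by
  have hzE : z ∉ E := fun h ↦ (hz z h).false
  refine goodLayerSpan_le.2 (fun G' hG' ↦ ?_) (ih (f ∘ insert z) j G hG)
  rw [← sub_eq_of_eq_add' (layerSum_succ_insert f j fun h ↦ hzE (hG'.subset h))]
  exact sub_mem (hG'.layerSum_insert_mem f hzE j.le_succ)
    (hG'.layerSum_mem_insert_ground f hz (Nat.lt_succ_of_le hG'.card_le))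

lemma layerSum_mem_insert_ground (f : Finset α → M) (j : ℕ) (hG : G ⊆ E) :
    layerSum f j G ∈ goodLayerSpan (insert z E) f j G := by
  have hzE : z ∉ E := fun h ↦ (hz z h).false
  cases j with
  | zero => exact layerSum_zero_mem f (hG.trans (subset_insert z E))
  | succ j =>
    refine goodLayerSpan_le.2 (fun G' hG' ↦ ?_) (ih f (j + 1) G hG)
    rcases lt_or_ge #E (#G' + (j + 1)) with hcard | -
    · exact hG'.layerSum_mem_insert_ground f hz hcard
    · rw [← sub_eq_of_eq_add (layerSum_succ_insert f j fun h ↦ hzE (hG'.subset h))]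
      exact sub_mem (hG'.layerSum_insert_mem f hzE le_rfl)
        (goodLayerSpan_mono hG'.le (layerSum_comp_insert_mem hz ih f j hG'.subset))

lemma layerSum_insert_mem_of_good (f : Finset α → M) (j : ℕ) (hG : G ⊆ E)
    (hgood : domLE G (E \ G)) :
    layerSum f j (insert z G) ∈ goodLayerSpan (insert z E) f j (insert z G) := by
  have hzE : z ∉ E := fun h ↦ (hz z h).false
  cases j with
  | zero => exact layerSum_zero_mem f (insert_subset_insert z hG)
  | succ j =>
    rcases le_or_gt #E (#G + (j + 1)) with hcard | hcard
    · exact layerSum_mem_goodLayerSpan_of_goodBelow f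
        (GoodBelow.insert_insert ⟨hG, hgood, hcard, domLE_refl G⟩ hzE)
    -- Now every good set missing at most `j + 1` elements of `E` has more elements than `G`.
    have le_insert {i : ℕ} {G' : Finset α} (hG' : GoodBelow E i G G') (hi : i ≤ j + 1) :
        domLE G' (insert z G) :=
      hG'.le.insert_right (by linarith [hG'.card_le]) fun x hx ↦ (hz x (hG'.subset hx)).le
    rw [layerSum_succ_insert f j fun h ↦ hzE (hG h)]
    refine add_mem
      (goodLayerSpan_le.2 (fun G' hG' ↦ ?_) (ih f (j + 1) G hG))
      (goodLayerSpan_le.2 (fun G' hG' ↦ ?_) (ih (f ∘ insert z) j G hG))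
    · exact goodLayerSpan_mono (le_insert hG' le_rfl)
        (layerSum_mem_insert_ground hz ih f (j + 1) hG'.subset)
    · exact goodLayerSpan_mono (le_insert hG' j.le_succ)
        (layerSum_comp_insert_mem hz ih f j hG'.subset)

lemma layerSum_insert_mem (f : Finset α → M) (j : ℕ) (hG : G ⊆ E) :
    layerSum f j (insert z G) ∈ goodLayerSpan (insert z E) f j (insert z G) := by
  have hzE : z ∉ E := fun h ↦ (hz z h).false
  rcases lt_or_ge (#G + 1) j with hj | hj
  · rw [layerSum_eq_zero f ((card_insert_le z G).trans_lt hj)]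
    exact zero_mem _
  -- The induction hypothesis at level `#G` expresses the single set `G` through good sets `G'`;
  -- summing over the `j`-subsets of `insert z V` for each `V` turns this into the claim.
  have hspan := ih (layerSum f j ∘ insert z) #G G hG
  rw [layerSum_card_self] at hspan
  refine goodLayerSpan_le.2 (fun G' hG' ↦ ?_) hspan
  rw [← sub_eq_of_eq_add' (layerSum_succ_insert _ #G fun h ↦ hzE (hG'.subset h)),
    layerSum_layerSum f hj]
  refine sub_mem (nsmul_mem (goodLayerSpan_mono (hG'.le.insert_insert fun h ↦ hzE (hG'.subset h))
    (layerSum_insert_mem_of_good hz ih f j hG'.subset hG'.good)) _) ?_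
  rcases lt_or_ge #G #G' with hcard | hcard
  · rw [layerSum_layerSum f hj]
    exact nsmul_mem (goodLayerSpan_mono
      (hG'.le.insert_right hcard fun x hx ↦ (hz x (hG'.subset hx)).le)
      (layerSum_mem_insert_ground hz ih f j hG'.subset)) _
  · rw [layerSum_eq_zero _ (Nat.lt_succ_of_le hcard)]
    exact zero_mem _

end Step

theorem layerSum_mem_goodLayerSpan (f : Finset α → M) (j : ℕ) (hG : G ⊆ E) :
    layerSum f j G ∈ goodLayerSpan E f j G := by
  induction E using Finset.induction_on_max generalizing f j G with
  | empty =>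
    obtain rfl := subset_empty.1 hG
    exact layerSum_mem_goodLayerSpan_of_goodBelow f
      ⟨hG, domLE_of_subset sdiff_subset, by simp, domLE_refl ∅⟩
  | insert z E hz ih =>
    have ih' (f : Finset α → M) (j : ℕ) (G) (hG : G ⊆ E) := ih f j hG
    by_cases hzG : z ∈ G
    · rw [← insert_erase hzG]
      exact layerSum_insert_mem hz ih' f j (subset_insert_iff.1 hG)
    · exact layerSum_mem_insert_ground hz ih' f j ((subset_insert_iff_of_notMem hzG).1 hG)

theorem mem_of_forall_layerSum_mem [Fintype α] {K : AddSubgroup M} (f : Finset α → M)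
    (S : Finset α) (hK : ∀ A, domLE A Aᶜ → domLE A S → layerSum f #S A ∈ K) : f S ∈ K := by
  rw [← layerSum_card_self f S]
  refine goodLayerSpan_le.2 (fun A hA ↦ hK A ?_ hA.le)
    (layerSum_mem_goodLayerSpan f #S (subset_univ S))
  rw [compl_eq_univ_sdiff]
  exact hA.good

end GoodLayerSpan

section BlockDet

variable {ι R : Type*} [Fintype ι] [CommRing R]

/-- The determinant of the matrix obtained from `Y` by replacing the entries outside
`A × B ∪ Aᶜ × Bᶜ` by zero. Up to sign it is the Laplace product `Y(A|B) Y(Aᶜ|Bᶜ)`. -/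
def blockDet [DecidableEq ι] (Y : Matrix ι ι R) (A B : Finset ι) : R :=
  (Matrix.of fun i j ↦ if i ∈ A ↔ j ∈ B then Y i j else 0).det

lemma blockDet_transpose [DecidableEq ι] (Y : Matrix ι ι R) (A B : Finset ι) :
    blockDet Y.transpose B A = blockDet Y A B := by
  rw [blockDet, blockDet, ← Matrix.det_transpose]
  congr 1
  ext i j
  simp [iff_comm]

lemma blockDet_eq_sum [DecidableEq ι] (Y : Matrix ι ι R) (A B : Finset ι) :
    blockDet Y A B = ∑ σ : Equiv.Perm ι,
      if B.map σ.toEmbedding = A then Equiv.Perm.sign σ • ∏ i, Y (σ i) i else 0 := by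
  rw [blockDet, Matrix.det_apply]
  refine sum_congr rfl fun σ _ ↦ ?_
  have hmap : B.map σ.toEmbedding = A ↔ ∀ i, σ i ∈ A ↔ i ∈ B := by
    rw [Finset.ext_iff, ← σ.forall_congr_right]
    simp only [mem_map_equiv, Equiv.symm_apply_apply]
    exact forall_congr' fun i ↦ iff_comm
  split_ifs with hσ
  · congr 1
    exact prod_congr rfl fun i _ ↦ if_pos (hmap.1 hσ i)
  · obtain ⟨i, hi⟩ := not_forall.1 (mt hmap.2 hσ)
    rw [prod_eq_zero (mem_univ i) (if_neg hi), smul_zero]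

lemma blockDet_eq_zero [DecidableEq ι] (Y : Matrix ι ι R) {A B : Finset ι} (h : #A ≠ #B) :
    blockDet Y A B = 0 := by
  rw [blockDet_eq_sum]
  refine sum_eq_zero fun σ _ ↦ if_neg ?_
  rintro rfl
  exact h (card_map _)

/-- Both sides sum the terms of `det Y` over the permutations that map `B` into `A`. -/
lemma layerSum_blockDet_left [DecidableEq ι] (Y : Matrix ι ι R) (A B : Finset ι) :
    layerSum (blockDet Y · B) #B A = ∑ U with B ⊆ U, blockDet Y A U := by
  simp only [layerSum, blockDet_eq_sum]
  rw [sum_comm, sum_comm (s := {U | B ⊆ U})]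
  refine sum_congr rfl fun σ _ ↦ ?_
  have hmap (U : Finset ι) : U.map σ.toEmbedding = A ↔ A.map σ.symm.toEmbedding = U := by
    constructor <;> rintro rfl <;> ext <;> simp
  have hsubset : B.map σ.toEmbedding ⊆ A ↔ B ⊆ A.map σ.symm.toEmbedding := by
    simp only [subset_iff, mem_map_equiv, Equiv.symm_symm]
    exact σ.symm.forall_congr fun i ↦ by rw [σ.apply_symm_apply]
  simp only [hmap, sum_ite_eq, mem_powersetCard, card_map, and_true, mem_filter, mem_univ,
    true_and, hsubset]

lemma layerSum_blockDet_right [DecidableEq ι] (Y : Matrix ι ι R) (A B : Finset ι) :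
    layerSum (blockDet Y A) #A B = ∑ U with A ⊆ U, blockDet Y U B := by
  have h := layerSum_blockDet_left Y.transpose B A
  simpa only [blockDet_transpose] using h

theorem blockDet_mem_closure_good [LinearOrder ι] (Y : Matrix ι ι R) (S T : Finset ι) :
    blockDet Y S T ∈ AddSubgroup.closure {x | ∃ A B : Finset ι,
      (domLE A Aᶜ ∧ domLE B Bᶜ) ∧ (domLE A S ∧ domLE B T) ∧ blockDet Y A B = x} := by
  set K : AddSubgroup R := AddSubgroup.closure _
  have zero_mem_of_card {A B : Finset ι} (h : #A ≠ #B) : blockDet Y A B ∈ K := by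
    rw [blockDet_eq_zero Y h]
    exact zero_mem K
  rcases ne_or_eq #S #T with hST | hST
  · exact zero_mem_of_card hST
  refine mem_of_forall_layerSum_mem (blockDet Y · T) S fun A hA hAS ↦ ?_
  rw [hST, layerSum_blockDet_left]
  refine sum_mem fun U hU ↦ ?_
  have hTU : T ⊆ U := (mem_filter.1 hU).2
  rcases ne_or_eq #A #U with hAU | hAU
  · exact zero_mem_of_card hAU
  refine mem_of_forall_layerSum_mem (blockDet Y A) U fun B hB hBU ↦ ?_
  rw [← hAU, layerSum_blockDet_right]
  refine sum_mem fun A' hA' ↦ ?_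
  have hAA' : A ⊆ A' := (mem_filter.1 hA').2
  have hA'good : domLE A' A'ᶜ := (domLE_of_subset hAA').trans
    (hA.trans (domLE_of_subset (compl_subset_compl.2 hAA')))
  exact AddSubgroup.subset_closure ⟨A', B, ⟨hA'good, hB⟩,
    ⟨(domLE_of_subset hAA').trans hAS, hBU.trans (domLE_of_subset hTU)⟩, rfl⟩

end BlockDet

section Minors

variable {m n N : ℕ} {R : Type*} [CommRing R]

lemma minorM_eq_det (X : Matrix (Fin m) (Fin n) R) {A : Finset (Fin m)} {B : Finset (Fin n)}
    {p : ℕ} (hA : #A = p) (hB : #B = p) :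
    minorM X A B = (X.submatrix (A.orderEmbOfFin hA) (B.orderEmbOfFin hB)).det := by
  subst hA
  rw [minorM, dif_pos hB.symm]
  rfl

lemma minorM_eq_zero (X : Matrix (Fin m) (Fin n) R) {A : Finset (Fin m)} {B : Finset (Fin n)}
    (h : #A ≠ #B) : minorM X A B = 0 := dif_neg h

lemma map_minorM {S : Type*} [CommRing S] (φ : R →+* S) (X : Matrix (Fin m) (Fin n) R)
    (A : Finset (Fin m)) (B : Finset (Fin n)) : φ (minorM X A B) = minorM (X.map φ) A B := by
  unfold minorM
  split_ifs
  · exact φ.map_det _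
  · exact map_zero φ

lemma blockDet_eq_or_eq_neg (Y : Matrix (Fin N) (Fin N) R) (A B : Finset (Fin N)) :
    blockDet Y A B = minorM Y A B * minorM Y Aᶜ Bᶜ ∨
      blockDet Y A B = -(minorM Y A B * minorM Y Aᶜ Bᶜ) := by
  rcases ne_or_eq #A #B with h | h
  · simp [blockDet_eq_zero Y h, minorM_eq_zero Y h]
  have h' : #Aᶜ = #Bᶜ := by rw [card_compl, card_compl, h]
  let eA := finSumEquivOfFinset (s := A) rfl rfl
  let eB := finSumEquivOfFinset (s := B) h.symm h'.symm
  set Z : Matrix (Fin N) (Fin N) R := Matrix.of fun i j ↦ if i ∈ A ↔ j ∈ B then Y i j else 0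
  have hblocks : Z.reindex eA.symm eB.symm = Matrix.fromBlocks
      (Y.submatrix (A.orderEmbOfFin rfl) (B.orderEmbOfFin h.symm)) 0 0
      (Y.submatrix (Aᶜ.orderEmbOfFin rfl) (Bᶜ.orderEmbOfFin h'.symm)) := by
    have notMem_of_compl (C : Finset (Fin N)) {p : ℕ} (hC : #Cᶜ = p) (i : Fin p) :
        Cᶜ.orderEmbOfFin hC i ∉ C := mem_compl.1 (orderEmbOfFin_mem _ _ _)
    ext (i | i) (j | j) <;> simp [Z, eA, eB, notMem_of_compl]
  have hdet := Matrix.det_reindex eA.symm eB.symm Z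
  rw [hblocks, Matrix.det_fromBlocks_zero₂₁, ← minorM_eq_det Y rfl h.symm,
    ← minorM_eq_det Y rfl h'.symm] at hdet
  rw [hdet]
  change Z.det = _ ∨ Z.det = _
  rcases Int.units_eq_one_or (Equiv.Perm.sign (eB.symm.trans eA.symm.symm)) with hs | hs
  · left
    rw [hs, Units.val_one, Int.cast_one, one_mul]
  · right
    rw [hs, Units.val_neg, Units.val_one, Int.cast_neg, Int.cast_one, neg_one_mul, neg_neg]

lemma minorM_mul_minorM_compl_mem_iff {K : AddSubgroup R} (Y : Matrix (Fin N) (Fin N) R)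
    (A B : Finset (Fin N)) :
    minorM Y A B * minorM Y Aᶜ Bᶜ ∈ K ↔ blockDet Y A B ∈ K := by
  rcases blockDet_eq_or_eq_neg Y A B with h | h <;> simp [h]

lemma orderEmbOfFin_image {α β : Type*} [LinearOrder α] [LinearOrder β] {ρ : α → β}
    (hρ : Monotone ρ) {A : Finset α} (hinj : Set.InjOn ρ A) {p : ℕ} (hA : #A = p)
    (hA' : #(A.image ρ) = p) :
    ⇑((A.image ρ).orderEmbOfFin hA') = ρ ∘ A.orderEmbOfFin hA := by
  have hmem := orderEmbOfFin_mem A hA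
  refine (orderEmbOfFin_unique hA' (fun i ↦ mem_image_of_mem ρ (hmem i)) ?_).symm
  exact (hρ.comp (A.orderEmbOfFin hA).monotone).strictMono_of_injective fun i j hij ↦
    (A.orderEmbOfFin hA).injective (hinj (hmem i) (hmem j) hij)

variable (X : Matrix (Fin m) (Fin n) R) {ρ : Fin N → Fin m} {κ : Fin N → Fin n}
  {A B : Finset (Fin N)}

lemma minorM_submatrix (hρ : Monotone ρ) (hκ : Monotone κ) (hA : Set.InjOn ρ A)
    (hB : Set.InjOn κ B) :
    minorM (X.submatrix ρ κ) A B = minorM X (A.image ρ) (B.image κ) := by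
  have hA' := card_image_of_injOn hA
  have hB' := card_image_of_injOn hB
  rcases ne_or_eq #A #B with h | h
  · rw [minorM_eq_zero _ h, minorM_eq_zero _ (by rwa [hA', hB'])]
  · rw [minorM_eq_det _ rfl h.symm, minorM_eq_det _ hA' (hB'.trans h.symm),
      orderEmbOfFin_image hρ hA rfl, orderEmbOfFin_image hκ hB h.symm, Matrix.submatrix_submatrix]

lemma injOn_of_minorM_submatrix_ne_zero (h : minorM (X.submatrix ρ κ) A B ≠ 0) :
    Set.InjOn ρ A ∧ Set.InjOn κ B := by
  have hcard : #A = #B := by_contra fun hne ↦ h (minorM_eq_zero _ hne)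
  have exists_index {C : Finset (Fin N)} {p : ℕ} (hC : #C = p) {c : Fin N} (hc : c ∈ C) :
      ∃ i, C.orderEmbOfFin hC i = c := by
    rwa [← Set.mem_range, range_orderEmbOfFin]
  rw [minorM_eq_det _ rfl hcard.symm] at h
  refine ⟨fun a ha b hb hab ↦ ?_, fun a ha b hb hab ↦ ?_⟩ <;> by_contra hne
  · obtain ⟨i, rfl⟩ := exists_index rfl ha
    obtain ⟨j, rfl⟩ := exists_index rfl hb
    refine h (Matrix.det_zero_of_row_eq (i := i) (j := j) (fun hij ↦ hne (hij ▸ rfl)) ?_)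
    ext k
    simp [hab]
  · obtain ⟨i, rfl⟩ := exists_index hcard.symm ha
    obtain ⟨j, rfl⟩ := exists_index hcard.symm hb
    refine h (Matrix.det_zero_of_column_eq (i := i) (j := j) (fun hij ↦ hne (hij ▸ rfl)) ?_)
    simp [hab]

end Minors

section Merge

variable {α : Type*} [LinearOrder α] {N : ℕ} {ρ : Fin N → α} {A B : Finset (Fin N)}
  {S T : Finset α}

/-- The weakly increasing sequence `ρ` lists `S` and `T` together, the entries with index in `A`
coming from `S` and the others from `T`. An element of both sets is listed twice, and the copy
from `S` comes first. -/
structure IsMerge (ρ : Fin N → α) (A : Finset (Fin N)) (S T : Finset α) : Prop where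
  monotone : Monotone ρ
  injOn : Set.InjOn ρ A
  injOn_compl : Set.InjOn ρ ↑Aᶜ
  image : A.image ρ = S
  image_compl : Aᶜ.image ρ = T
  le_of_eq : ∀ ⦃i j⦄, i ∈ A → ρ i = ρ j → i ≤ j

lemma IsMerge.card_add_card (h : IsMerge ρ A S T) : #S + #T = N := by
  rw [← h.image, ← h.image_compl, card_image_of_injOn h.injOn, card_image_of_injOn h.injOn_compl,
    card_add_card_compl, Fintype.card_fin]

lemma IsMerge.eq_of_domLE (h : IsMerge ρ A S T) (hinj : Set.InjOn ρ B) (hBA : domLE B A)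
    (himage : B.image ρ = S) : B = A := by
  have exists_index : ∀ b ∈ B, ∃ a ∈ A, ρ a = ρ b := fun b hb ↦ by
    rw [← mem_image, h.image, ← himage]
    exact mem_image_of_mem ρ hb
  choose! g hgA hgρ using exists_index
  refine hBA.antisymm (domLE_of_injOn hgA (fun b hb c hc hbc ↦ ?_)
    fun b hb ↦ h.le_of_eq (hgA b hb) (hgρ b hb))
  exact hinj hb hc (by rw [← hgρ b hb, hbc, hgρ c hc])

lemma exists_isMerge (S T : Finset α) :
    ∃ (N : ℕ) (ρ : Fin N → α) (A : Finset (Fin N)), IsMerge ρ A S T := by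
  -- Lexicographically, the copy of `x` labelled `false` precedes the one labelled `true`.
  let P : Finset (α ×ₗ Bool) := S.image (toLex ⟨·, false⟩) ∪ T.image (toLex ⟨·, true⟩)
  let e := P.orderEmbOfFin rfl
  let ρ (i : Fin #P) : α := (ofLex (e i)).1
  let label (i : Fin #P) : Bool := (ofLex (e i)).2
  let fiber (b : Bool) : Finset (Fin #P) := {i | label i = b}
  have he (i) : e i = toLex (ρ i, label i) := rfl
  have injOn_fiber (b : Bool) : Set.InjOn ρ (fiber b) := by
    intro i hi j hj hij
    have hlabel : label i = label j := (mem_filter.1 hi).2.trans (mem_filter.1 hj).2.symm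
    exact e.injective (by rw [he, he, hij, hlabel])
  have mem_image_fiber (b : Bool) (x : α) :
      x ∈ (fiber b).image ρ ↔ toLex (x, b) ∈ P := by
    rw [← mem_coe (s := P), ← P.range_orderEmbOfFin rfl, Set.mem_range, mem_image]
    refine exists_congr fun i ↦ ?_
    change _ ↔ toLex (ρ i, label i) = toLex (x, b)
    simp [fiber, and_comm]
  have hcompl : (fiber false)ᶜ = fiber true := by
    ext i
    simp [fiber]
  refine ⟨#P, ρ, fiber false, fun i j hij ↦ Prod.Lex.monotone_fst _ _ (e.monotone hij),
    injOn_fiber false, hcompl ▸ injOn_fiber true, ?_, ?_, fun i j hi hij ↦ ?_⟩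
  · ext x
    rw [mem_image_fiber]
    simp [P]
  · ext x
    rw [hcompl, mem_image_fiber]
    simp [P]
  · have hlabel : label i = false := (mem_filter.1 hi).2
    rw [← e.le_iff_le, he, he, hij, hlabel, Prod.Lex.le_iff]
    exact .inr ⟨rfl, Bool.false_le _⟩

end Merge

section Straightening

variable {m n N : ℕ} {R : Type*} [CommRing R] (X : Matrix (Fin m) (Fin n) R)
  {S' S'' : Finset (Fin m)} {T' T'' : Finset (Fin n)}

/-- The products of two minors of `X` whose index pairs are comparable, the first pair lying
strictly below `(S', T')`: these are the terms allowed when straightening a product whose first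
factor is `minorM X S' T'`. -/
def standardProductsBelow (S' : Finset (Fin m)) (T' : Finset (Fin n)) : Set R :=
  {x | ∃ S₁ S₂ T₁ T₂, (domLE S₁ S' ∧ domLE T₁ T' ∧ (S₁, T₁) ≠ (S', T')) ∧
    (domLE S₁ S₂ ∧ domLE T₁ T₂) ∧ minorM X S₁ T₁ * minorM X S₂ T₂ = x}

lemma minorM_mul_minorM_compl_mem_closure_of_good {ρ : Fin N → Fin m} {κ : Fin N → Fin n}
    {A A₀ B B₀ : Finset (Fin N)} (h : ¬(domLE S' S'' ∧ domLE T' T''))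
    (hρ : IsMerge ρ A₀ S' S'') (hκ : IsMerge κ B₀ T' T'')
    (hA : domLE A Aᶜ) (hB : domLE B Bᶜ) (hAA₀ : domLE A A₀) (hBB₀ : domLE B B₀) :
    minorM (X.submatrix ρ κ) A B * minorM (X.submatrix ρ κ) Aᶜ Bᶜ ∈
      AddSubgroup.closure (standardProductsBelow X S' T') := by
  by_cases h₁ : minorM (X.submatrix ρ κ) A B = 0
  · simp [h₁]
  by_cases h₂ : minorM (X.submatrix ρ κ) Aᶜ Bᶜ = 0
  · simp [h₂]
  obtain ⟨hρA, hκB⟩ := injOn_of_minorM_submatrix_ne_zero X h₁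
  obtain ⟨hρAc, hκBc⟩ := injOn_of_minorM_submatrix_ne_zero X h₂
  rw [minorM_submatrix X hρ.monotone hκ.monotone hρA hκB,
    minorM_submatrix X hρ.monotone hκ.monotone hρAc hκBc]
  refine AddSubgroup.subset_closure ⟨_, _, _, _, ⟨?_, ?_, fun heq ↦ h ?_⟩,
    ⟨hA.image hρ.monotone hρA, hB.image hκ.monotone hκB⟩, rfl⟩
  · simpa only [hρ.image] using hAA₀.image hρ.monotone hρA
  · simpa only [hκ.image] using hBB₀.image hκ.monotone hκB
  · obtain ⟨hS, hT⟩ := Prod.mk.inj heq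
    obtain rfl := hρ.eq_of_domLE hρA hAA₀ hS
    obtain rfl := hκ.eq_of_domLE hκB hBB₀ hT
    rw [← hρ.image, ← hρ.image_compl, ← hκ.image, ← hκ.image_compl]
    exact ⟨hA.image hρ.monotone hρA, hB.image hκ.monotone hκB⟩

theorem minorM_mul_minorM_mem_closure (h : ¬(domLE S' S'' ∧ domLE T' T'')) :
    minorM X S' T' * minorM X S'' T'' ∈
      AddSubgroup.closure (standardProductsBelow X S' T') := by
  rcases ne_or_eq #S' #T' with h' | h'
  · simp [minorM_eq_zero X h']
  rcases ne_or_eq #S'' #T'' with h'' | h''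
  · simp [minorM_eq_zero X h'']
  obtain ⟨N, ρ, A₀, hρ⟩ := exists_isMerge S' S''
  obtain ⟨N', κ, B₀, hκ⟩ := exists_isMerge T' T''
  obtain rfl : N = N' := by rw [← hρ.card_add_card, ← hκ.card_add_card, h', h'']
  have hfirst := minorM_submatrix X hρ.monotone hκ.monotone hρ.injOn hκ.injOn
  have hsecond := minorM_submatrix X hρ.monotone hκ.monotone hρ.injOn_compl hκ.injOn_compl
  rw [hρ.image, hκ.image] at hfirst
  rw [hρ.image_compl, hκ.image_compl] at hsecond
  rw [← hfirst, ← hsecond, minorM_mul_minorM_compl_mem_iff]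
  refine (AddSubgroup.closure_le _).2 ?_ (blockDet_mem_closure_good (X.submatrix ρ κ) A₀ B₀)
  rintro _ ⟨A, B, ⟨hA, hB⟩, ⟨hAA₀, hBB₀⟩, rfl⟩
  exact (minorM_mul_minorM_compl_mem_iff _ A B).1
    (minorM_mul_minorM_compl_mem_closure_of_good X h hρ hκ hA hB hAA₀ hBB₀)

end Straightening

lemma exists_signed_sum_of_mem_closure {M : Type*} [AddCommGroup M] {s : Set M} {x : M}
    (hx : x ∈ AddSubgroup.closure s) :
    ∃ (k : ℕ) (ε : Fin k → ℤ) (y : Fin k → M),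
      (∀ i, ε i = 1 ∨ ε i = -1) ∧ (∀ i, y i ∈ s) ∧ x = ∑ i, ε i • y i := by
  rw [← AddSubgroup.mem_toAddSubmonoid, AddSubgroup.closure_toAddSubmonoid] at hx
  obtain ⟨l, hl, rfl⟩ := AddSubmonoid.exists_list_of_mem_closure hx
  have exists_sign (i : Fin l.length) :
      ∃ (ε : ℤ) (y : M), (ε = 1 ∨ ε = -1) ∧ y ∈ s ∧ l[i] = ε • y := by
    rcases hl l[i] (List.getElem_mem _) with hi | hi
    · exact ⟨1, l[i], .inl rfl, hi, (one_zsmul _).symm⟩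
    · exact ⟨-1, -l[i], .inr rfl, hi, by rw [neg_one_zsmul, neg_neg]⟩
  choose ε y hε hy hl using exists_sign
  exact ⟨l.length, ε, y, hε, hy, by simp only [← hl, Fin.getElem_fin, Fin.sum_univ_getElem]⟩

lemma exists_map_genX_eq {m n : ℕ} {R : Type*} [CommRing R] (X : Matrix (Fin m) (Fin n) R) :
    ∃ φ : MvPolynomial (Fin m × Fin n) ℤ →+* R, (genX m n ℤ).map φ = X :=
  ⟨MvPolynomial.eval₂Hom (Int.castRingHom R) fun p ↦ X p.1 p.2, by ext; simp [genX]⟩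

/-- Theorem 3 (straightening law for minors): if `(S′,T′) ≰ (S″,T″)` then
`(S′|T′)(S″|T″) = Σᵢ ±(S′ᵢ|T′ᵢ)(S″ᵢ|T″ᵢ)` with `(S′ᵢ,T′ᵢ) < (S′,T′)` and
`(S′ᵢ,T′ᵢ) ≤ (S″ᵢ,T″ᵢ)`; the same signed combination works for every `m×n` matrix
over every commutative ring. -/
theorem statement12 {m n : ℕ} (S' S'' : Finset (Fin m)) (T' T'' : Finset (Fin n))
    (h : ¬(domLE S' S'' ∧ domLE T' T'')) :
    ∃ (k : ℕ) (S₁ S₂ : Fin k → Finset (Fin m)) (T₁ T₂ : Fin k → Finset (Fin n))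
      (ε : Fin k → ℤ),
      (∀ i, ε i = 1 ∨ ε i = -1) ∧
      (∀ i, domLE (S₁ i) S' ∧ domLE (T₁ i) T' ∧ (S₁ i, T₁ i) ≠ (S', T')) ∧
      (∀ i, domLE (S₁ i) (S₂ i) ∧ domLE (T₁ i) (T₂ i)) ∧
      ∀ (R : Type*) [CommRing R] (X : Matrix (Fin m) (Fin n) R),
        minorM X S' T' * minorM X S'' T'' =
          ∑ i, (ε i : R) * (minorM X (S₁ i) (T₁ i) * minorM X (S₂ i) (T₂ i)) := by
  obtain ⟨k, ε, y, hε, hy, hsum⟩ :=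
    exists_signed_sum_of_mem_closure (minorM_mul_minorM_mem_closure (genX m n ℤ) h)
  choose S₁ S₂ T₁ T₂ hbelow hstandard hproduct using hy
  refine ⟨k, S₁, S₂, T₁, T₂, ε, hε, hbelow, hstandard, fun R _ X ↦ ?_⟩
  obtain ⟨φ, rfl⟩ := exists_map_genX_eq X
  simp only [← map_minorM, ← map_mul, hproduct, hsum]
  simp only [map_sum, zsmul_eq_mul, map_mul, map_intCast]
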